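/- arXiv:1411.6298 — 2 statements merged into one kernel-verified Lean document; each statement's English description precedes it below -/
import Mathlib

section
/- Let d ≥ 1, t ≥ 0, n ∈ ℤ/dℤ, let v ∈ ℂ⁴ be a unit coin vector, and let Q = diag(1,1,1,−1) on the coin registers. Then the following identities hold: p(n,t,0;|0⟩⊗v) = p(n,t,6;|0⟩⊗Qv), p(n,t,2;|0⟩⊗v) = p(n,t,4;|0⟩⊗Qv), and p(n,t,1;|0⟩⊗v) = p(n,t,5;|0⟩⊗Qv). -/
open scoped Classical
open Complex Matrix Finset Filter

noncomputable section

/-- The 2×2 coin matrix `C(θ)`. -/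
def Cmat (θ : ℝ) : Matrix (Fin 2) (Fin 2) ℂ :=
  !![(Real.cos θ : ℂ), (Real.sin θ : ℂ); (Real.sin θ : ℂ), -(Real.cos θ : ℂ)]

/-- Encode a pair of coin states into `Fin 4` (ordered basis `|↓↓⟩,|↓↑⟩,|↑↓⟩,|↑↑⟩`). -/
def enc (c₁ c₂ : Fin 2) : Fin 4 := ⟨2 * c₁.val + c₂.val, by omega⟩

/-- First coin register of a combined index. -/
def dec₁ (i : Fin 4) : Fin 2 := ⟨i.val / 2, by omega⟩

/-- Second (active) coin register of a combined index. -/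
def dec₂ (i : Fin 4) : Fin 2 := ⟨i.val % 2, by omega⟩

/-- Coin flip operator `Ĉ(φ) = |↓⟩⟨↓|⊗C(π/4) + |↑⟩⟨↑|⊗C((π/4)(1+φ))` as a 4×4 matrix. -/
def Chat (φ : ℝ) : Matrix (Fin 4) (Fin 4) ℂ :=
  Matrix.of fun i j =>
    if dec₁ i = dec₁ j then
      (if dec₁ i = 0 then Cmat (Real.pi / 4) else Cmat (Real.pi / 4 * (1 + φ)))
        (dec₂ i) (dec₂ j)
    else 0

/-- A state of a walk on the `d`-cycle with two coin/memory registers: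
position `ZMod d`, combined coin index `Fin 4`. -/
abbrev WState (d : ℕ) := ZMod d → Fin 4 → ℂ

/-- Application of the coin flip operator `I_P ⊗ Ĉ(φ)`. -/
def coinOp (d : ℕ) (φ : ℝ) (ψ : WState d) : WState d :=
  fun n => (Chat φ).mulVec (ψ n)

/-- The shift operator: `|n,c₁,↓⟩ ↦ |n-1,c₁,↓⟩`, `|n,c₁,↑⟩ ↦ |n+1,c₁,↑⟩`. -/
def shiftOp (d : ℕ) (ψ : WState d) : WState d :=
  fun n i => if dec₂ i = 0 then ψ (n + 1) i else ψ (n - 1) i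

/-- The memory update operator `I_P ⊗ M` swapping the two coin registers. -/
def memOp (d : ℕ) (ψ : WState d) : WState d :=
  fun n i => ψ n (enc (dec₂ i) (dec₁ i))

/-- One step `U(φ) = (I_P⊗M)·S·(I_P⊗Ĉ(φ))` of the recycled-coin walk. -/
def Urc (d : ℕ) (φ : ℝ) (ψ : WState d) : WState d :=
  memOp d (shiftOp d (coinOp d φ ψ))

/-- The localized initial state `|0⟩ ⊗ v`. -/
def initState (d : ℕ) (v : Fin 4 → ℂ) : WState d :=
  fun n i => if n = 0 then v i else 0

/-- Position probability `p(n,t,φ;ψ₀)` of the recycled-coin walk. -/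
def prob (d : ℕ) (φ : ℝ) (ψ₀ : WState d) (n : ZMod d) (t : ℕ) : ℝ :=
  ∑ i : Fin 4, ‖((Urc d φ)^[t] ψ₀) n i‖ ^ 2

/-- `Q = diag(1,1,1,-1)`. -/
def Qmat : Matrix (Fin 4) (Fin 4) ℂ := Matrix.diagonal ![1, 1, 1, -1]

/-- Fourier-space one-step matrix `M_k(θ)` of the recycled-coin walk. -/
def Mk (d : ℕ) (k : ZMod d) (θ : ℝ) : Matrix (Fin 4) (Fin 4) ℂ :=
  let ω : ℂ := Complex.exp (2 * Real.pi * Complex.I * k.val / d)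
  let ωb : ℂ := Complex.exp (-(2 * Real.pi * Complex.I * k.val / d))
  !![ω / Real.sqrt 2, ω / Real.sqrt 2, 0, 0;
     0, 0, ω * Real.cos θ, ω * Real.sin θ;
     ωb / Real.sqrt 2, -(ωb / Real.sqrt 2), 0, 0;
     0, 0, ωb * Real.sin θ, -(ωb * Real.cos θ)]

/-- Fourier-space one-step matrix `N_k` of the memory walk with Hadamard coin. -/
def Nk (d : ℕ) (k : ZMod d) : Matrix (Fin 4) (Fin 4) ℂ :=
  let ω : ℂ := Complex.exp (2 * Real.pi * Complex.I * k.val / d)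
  let ωb : ℂ := Complex.exp (-(2 * Real.pi * Complex.I * k.val / d))
  ((Real.sqrt 2 : ℂ))⁻¹ • !![ω, 0, ω, 0; 0, ωb, 0, ωb; 0, ω, 0, -ω; ωb, 0, -ωb, 0]

/-- The permutation matrix `P` sending `(α,β,γ,δ)ᵀ` to `(α,γ,δ,β)ᵀ`. -/
def Pmat : Matrix (Fin 4) (Fin 4) ℂ :=
  !![1, 0, 0, 0; 0, 0, 1, 0; 0, 0, 0, 1; 0, 1, 0, 0]

/-- Hermitian inner product on `ℂ⁴`, conjugate linear in the first slot. -/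
def cdot (u v : Fin 4 → ℂ) : ℂ := ∑ i : Fin 4, (starRingEnd ℂ) (u i) * v i

/-- Coin flip operator `I_M ⊗ C(π/4)` of the memory walk. -/
def coinMem (d : ℕ) (ψ : WState d) : WState d :=
  fun n => (Matrix.of fun i j =>
    if dec₁ i = dec₁ j then Cmat (Real.pi / 4) (dec₂ i) (dec₂ j) else 0 :
    Matrix (Fin 4) (Fin 4) ℂ).mulVec (ψ n)

/-- The shift operator `S_𝓜` of the memory walk (registers: memory, coin). -/
def shiftMem (d : ℕ) (ψ : WState d) : WState d :=
  fun n i =>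
    if i = (0 : Fin 4) then ψ (n + 1) 0
    else if i = (1 : Fin 4) then ψ (n + 1) 3
    else if i = (2 : Fin 4) then ψ (n - 1) 2
    else ψ (n - 1) 1

/-- One step `U_𝓜 = S_𝓜 · (I_P⊗I_M⊗C(π/4))` of the quantum walk with memory. -/
def Umem (d : ℕ) (ψ : WState d) : WState d :=
  shiftMem d (coinMem d ψ)

/-- Position probability `p_𝓜(n,t;ψ₀)` of the quantum walk with memory. -/
def probMem (d : ℕ) (ψ₀ : WState d) (n : ZMod d) (t : ℕ) : ℝ :=
  ∑ i : Fin 4, ‖((Umem d)^[t] ψ₀) n i‖ ^ 2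

/-- Matrices `M₊(θ)` (statement 9). -/
def Mplus (θ : ℝ) : Matrix (Fin 4) (Fin 4) ℂ :=
  !![1 / Real.sqrt 2, 1 / Real.sqrt 2, 0, 0;
     0, 0, Real.cos θ, Real.sin θ;
     0, 0, 0, 0;
     0, 0, 0, 0]

/-- Matrices `M₋(θ)` (statement 9). -/
def Mminus (θ : ℝ) : Matrix (Fin 4) (Fin 4) ℂ :=
  !![0, 0, 0, 0;
     0, 0, 0, 0;
     1 / Real.sqrt 2, -(1 / Real.sqrt 2 : ℂ), 0, 0;
     0, 0, Real.sin θ, -(Real.cos θ : ℂ)]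

/-- Fourier transform of an amplitude function. -/
def FT (d : ℕ) [NeZero d] (ψ : WState d) (k : ZMod d) : Fin 4 → ℂ :=
  ∑ n : ZMod d, Complex.exp (-(2 * Real.pi * Complex.I * k.val * n.val / d)) • ψ n

/-!
The parameters `φ` and `6 - φ` give coin angles that add up to `2π`, so their coins differ only in
the sign of the sine, and `diag(1, -1)` conjugates one into the other. The matrix `Q` is this
conjugation controlled by the first register, hence it intertwines `Ĉ(φ)` with `Ĉ(6 - φ)`. Being
diagonal it commutes with the shift, and being symmetric in the two registers it commutes with the
memory update. Thus `Q` intertwines the two evolutions, and as its entries are unimodular it does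
not change position probabilities.
-/

/-- The block operator `|↓⟩⟨↓| ⊗ A + |↑⟩⟨↑| ⊗ B` on the two coin registers, which lets the first
register select the operator applied to the second. -/
def controlled (A B : Matrix (Fin 2) (Fin 2) ℂ) : Matrix (Fin 4) (Fin 4) ℂ :=
  Matrix.of fun i j =>
    if dec₁ i = dec₁ j then (if dec₁ i = 0 then A else B) (dec₂ i) (dec₂ j) else 0

/-- The operator `I_P ⊗ A` acting by `A` on the coin registers at every position. -/
def onCoin (d : ℕ) (A : Matrix (Fin 4) (Fin 4) ℂ) (ψ : WState d) : WState d :=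
  fun n => A *ᵥ ψ n

lemma controlled_mul (A B A' B' : Matrix (Fin 2) (Fin 2) ℂ) :
    controlled A B * controlled A' B' = controlled (A * A') (B * B') := by
  ext i j
  fin_cases i <;> fin_cases j <;>
    simp [controlled, dec₁, dec₂, Matrix.mul_apply, Fin.sum_univ_four]

lemma Chat_eq_controlled (φ : ℝ) :
    Chat φ = controlled (Cmat (Real.pi / 4)) (Cmat (Real.pi / 4 * (1 + φ))) :=
  rfl

lemma Qmat_eq_controlled : Qmat = controlled 1 (diagonal ![1, -1]) := by
  ext i j
  fin_cases i <;> fin_cases j <;> simp [Qmat, controlled, dec₁, dec₂]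

lemma Cmat_two_pi_sub (θ : ℝ) :
    Cmat (2 * Real.pi - θ) =
      !![(Real.cos θ : ℂ), -(Real.sin θ : ℂ); -(Real.sin θ : ℂ), -(Real.cos θ : ℂ)] := by
  rw [Cmat, Real.cos_two_pi_sub, Real.sin_two_pi_sub, Complex.ofReal_neg]

lemma semiconjBy_diagonal_Cmat (θ : ℝ) :
    SemiconjBy (diagonal ![1, -1]) (Cmat θ) (Cmat (2 * Real.pi - θ)) := by
  rw [SemiconjBy, Cmat_two_pi_sub, Cmat]
  ext a b
  fin_cases a <;> fin_cases b <;> simp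

lemma semiconjBy_Qmat_Chat {φ φ' : ℝ} (h : φ + φ' = 6) :
    SemiconjBy Qmat (Chat φ) (Chat φ') := by
  have angle_eq : Real.pi / 4 * (1 + φ') = 2 * Real.pi - Real.pi / 4 * (1 + φ) := by
    rw [eq_sub_of_add_eq' h]
    ring
  rw [SemiconjBy, Qmat_eq_controlled, Chat_eq_controlled, Chat_eq_controlled, controlled_mul,
    controlled_mul, angle_eq, one_mul, mul_one, (semiconjBy_diagonal_Cmat _).eq]

section Walk

variable {d : ℕ}

lemma semiconj_onCoin {A B C : Matrix (Fin 4) (Fin 4) ℂ} (h : SemiconjBy A B C) :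
    Function.Semiconj (onCoin d A) (onCoin d B) (onCoin d C) := by
  intro ψ
  funext n
  simp only [onCoin, mulVec_mulVec, h.eq]

lemma onCoin_diagonal_apply (w : Fin 4 → ℂ) (ψ : WState d) (n : ZMod d) (i : Fin 4) :
    onCoin d (diagonal w) ψ n i = w i * ψ n i :=
  mulVec_diagonal w (ψ n) i

lemma commute_onCoin_diagonal_shiftOp (w : Fin 4 → ℂ) :
    Function.Commute (onCoin d (diagonal w)) (shiftOp d) := by
  intro ψ
  funext n i
  simp only [onCoin_diagonal_apply, shiftOp, mul_ite]

lemma commute_onCoin_diagonal_memOp {w : Fin 4 → ℂ}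
    (hw : ∀ i, w (enc (dec₂ i) (dec₁ i)) = w i) :
    Function.Commute (onCoin d (diagonal w)) (memOp d) := by
  intro ψ
  funext n i
  simp only [onCoin_diagonal_apply, memOp, hw]

lemma norm_onCoin_diagonal_apply {w : Fin 4 → ℂ} (hw : ∀ i, ‖w i‖ = 1) (ψ : WState d)
    (n : ZMod d) (i : Fin 4) : ‖onCoin d (diagonal w) ψ n i‖ = ‖ψ n i‖ := by
  rw [onCoin_diagonal_apply, norm_mul, hw, one_mul]

lemma onCoin_initState (A : Matrix (Fin 4) (Fin 4) ℂ) (v : Fin 4 → ℂ) :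
    onCoin d A (initState d v) = initState d (A *ᵥ v) := by
  funext n i
  by_cases hn : n = 0 <;> simp [onCoin, initState, mulVec, dotProduct, hn]

lemma semiconj_onCoin_Qmat_Urc {φ φ' : ℝ} (h : φ + φ' = 6) :
    Function.Semiconj (onCoin d Qmat) (Urc d φ) (Urc d φ') := by
  have coin : Function.Semiconj (onCoin d Qmat) (coinOp d φ) (coinOp d φ') :=
    semiconj_onCoin (semiconjBy_Qmat_Chat h)
  have shift : Function.Commute (onCoin d Qmat) (shiftOp d) :=
    commute_onCoin_diagonal_shiftOp _
  have memory : Function.Commute (onCoin d Qmat) (memOp d) :=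
    commute_onCoin_diagonal_memOp fun i => by fin_cases i <;> rfl
  exact memory.semiconj.comp_right (shift.semiconj.comp_right coin)

lemma norm_onCoin_Qmat_apply (ψ : WState d) (n : ZMod d) (i : Fin 4) :
    ‖onCoin d Qmat ψ n i‖ = ‖ψ n i‖ :=
  norm_onCoin_diagonal_apply (fun i => by fin_cases i <;> simp) ψ n i

theorem statement3_general {φ φ' : ℝ} (h : φ + φ' = 6) (ψ₀ : WState d) (n : ZMod d) (t : ℕ) :
    prob d φ ψ₀ n t = prob d φ' (onCoin d Qmat ψ₀) n t := by
  have evolution : onCoin d Qmat ((Urc d φ)^[t] ψ₀) = (Urc d φ')^[t] (onCoin d Qmat ψ₀) :=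
    (semiconj_onCoin_Qmat_Urc h).iterate_right t ψ₀
  simp only [prob, ← evolution, norm_onCoin_Qmat_apply]

end Walk

/-- the identities relating memory parameters `0↔6`, `2↔4`, `1↔5`
via the matrix `Q = diag(1,1,1,-1)`. -/
theorem statement3 (d : ℕ) (hd : 1 ≤ d) (t : ℕ) (n : ZMod d)
    (v : Fin 4 → ℂ) (hv : ∑ i : Fin 4, ‖v i‖ ^ 2 = 1) :
    prob d 0 (initState d v) n t = prob d 6 (initState d (Qmat.mulVec v)) n t ∧
    prob d 2 (initState d v) n t = prob d 4 (initState d (Qmat.mulVec v)) n t ∧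
    prob d 1 (initState d v) n t = prob d 5 (initState d (Qmat.mulVec v)) n t := by
  rw [← onCoin_initState]
  refine ⟨?_, ?_, ?_⟩ <;> exact statement3_general (by norm_num) _ n t

end
end

section
/- Let d ≥ 1, φ ∈ ℝ, θ = (π/4)(1+φ), and let v ∈ ℂ⁴ be a unit vector with initial state ψ₀ = |0⟩⊗v. For each k ∈ ℤ/dℤ, let {φ_j(k)}_{j=1}^{4} be an orthonormal basis of eigenvectors of M_k(θ) with corresponding eigenvalues λ_j(k), and set α_j(k) = ⟨φ_j(k), v⟩. Then for every n ∈ ℤ/dℤ, the time-averaged distribution p̄(n,φ;ψ₀) = lim_{T→∞} (1/T)·Σ_{t=1}^{T} p(n,t,φ;ψ₀) exists and equals Σ f(n,k,m,j,l), where the sum ranges over all quadruples (k,m,j,l) with λ_j(k) = λ_l(m), and f(n,k,m,j,l) = (1/d²)·\overline{α_j(k)}·α_l(m)·⟨φ_j(k),φ_l(m)⟩·e^{2πin(m−k)/d}. -/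
open scoped Classical
open Complex Matrix Finset Filter

noncomputable section

/-!
The discrete Fourier transform in the position variable turns one step of the walk into
multiplication by the unitary matrix `M_k(θ)`, because the step is the sum of a left and a right
translation with constant matrix coefficients `M₊(θ)` and `M₋(θ)`. Expanding in eigenvectors, the
amplitude at `n` after `t` steps is `∑ λ_j(k) ^ t • c_j(k)` with vectors `c_j(k)` independent of
`t`. Its squared norm is a combination of the powers `(conj λ_j(k) * λ_l(m)) ^ t` of numbers on the
unit circle, and the time average of the powers of such a number `z` tends to `1` if `z = 1` and to
`0` otherwise.
-/

open scoped Topology ComplexConjugate InnerProductSpace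

section TimeAverage

variable {𝕜 : Type*} [RCLike 𝕜]

lemma tendsto_average_pow [DecidableEq 𝕜] {z : 𝕜} (hz : ‖z‖ ≤ 1) :
    Tendsto (fun T : ℕ => 1 / (T : 𝕜) * ∑ t ∈ Icc 1 T, z ^ t) atTop
      (𝓝 (if z = 1 then 1 else 0)) := by
  split_ifs with hz1
  · refine tendsto_const_nhds.congr' ?_
    filter_upwards [eventually_ne_atTop 0] with T hT
    simp [hz1, hT]
  · have sum_eq (T : ℕ) : ∑ t ∈ Icc 1 T, z ^ t = (z ^ (T + 1) - z ^ 1) / (z - 1) := by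
      rw [← Ico_add_one_right_eq_Icc, geom_sum_Ico hz1 (by lia)]
    have norm_sum_le (T : ℕ) : ‖∑ t ∈ Icc 1 T, z ^ t‖ ≤ (1 + 1) / ‖z - 1‖ := by
      have norm_pow_le (s : ℕ) : ‖z ^ s‖ ≤ 1 :=
        (norm_pow z s).trans_le (pow_le_one₀ (norm_nonneg z) hz)
      rw [sum_eq, norm_div]
      gcongr
      exact norm_sub_le_of_le (norm_pow_le _) (norm_pow_le _)
    exact tendsto_one_div_atTop_nhds_zero_nat.zero_mul_isBoundedUnder_le
      (isBoundedUnder_of ⟨_, norm_sum_le⟩)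

lemma tendsto_average_sum_mul_pow [DecidableEq 𝕜] {ι : Type*} (s : Finset ι) (a z : ι → 𝕜)
    (hz : ∀ i ∈ s, ‖z i‖ ≤ 1) :
    Tendsto (fun T : ℕ => 1 / (T : 𝕜) * ∑ t ∈ Icc 1 T, ∑ i ∈ s, a i * z i ^ t) atTop
      (𝓝 (∑ i ∈ s, if z i = 1 then a i else 0)) := by
  have average_eq (T : ℕ) : 1 / (T : 𝕜) * ∑ t ∈ Icc 1 T, ∑ i ∈ s, a i * z i ^ t =
      ∑ i ∈ s, a i * (1 / (T : 𝕜) * ∑ t ∈ Icc 1 T, z i ^ t) := by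
    rw [sum_comm, mul_sum]
    exact sum_congr rfl fun i _ => by rw [← mul_sum, mul_left_comm]
  simp only [average_eq]
  refine tendsto_finsetSum s fun i hi => ?_
  simpa using (tendsto_average_pow (hz i hi)).const_mul (a i)

lemma conj_mul_eq_one_iff {z w : 𝕜} (hz : ‖z‖ = 1) : conj z * w = 1 ↔ z = w := by
  have hz0 : z ≠ 0 := norm_ne_zero_iff.mp (by simp [hz])
  rw [← RCLike.inv_eq_conj hz, inv_mul_eq_one₀ hz0]

theorem tendsto_average_norm_sq_sum_pow_smul [DecidableEq 𝕜] {E : Type*}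
    [SeminormedAddCommGroup E] [InnerProductSpace 𝕜 E] {ι : Type*} [Fintype ι] {z : ι → 𝕜}
    (hz : ∀ a, ‖z a‖ = 1) (c : ι → E) :
    Tendsto (fun T : ℕ => 1 / (T : 𝕜) * ∑ t ∈ Icc 1 T, ((‖∑ a, z a ^ t • c a‖ ^ 2 : ℝ) : 𝕜)) atTop
      (𝓝 (∑ a, ∑ b, if z a = z b then ⟪c a, c b⟫_𝕜 else 0)) := by
  have norm_sq_eq (t : ℕ) : ((‖∑ a, z a ^ t • c a‖ ^ 2 : ℝ) : 𝕜) =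
      ∑ p : ι × ι, ⟪c p.1, c p.2⟫_𝕜 * (conj (z p.1) * z p.2) ^ t := by
    rw [RCLike.ofReal_pow, ← inner_self_eq_norm_sq_to_K, sum_inner, Fintype.sum_prod_type]
    simp only [inner_sum, inner_smul_left, inner_smul_right, map_pow, mul_pow]
    exact sum_congr rfl fun a _ => sum_congr rfl fun b _ => by ring
  simp only [norm_sq_eq]
  simpa only [conj_mul_eq_one_iff (hz _), Fintype.sum_prod_type] using
    tendsto_average_sum_mul_pow univ (fun p : ι × ι => ⟪c p.1, c p.2⟫_𝕜)
      (fun p => conj (z p.1) * z p.2) fun p _ => by simp [hz]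

end TimeAverage

section EigenvectorExpansion

variable {ι R : Type*} [Fintype ι] [DecidableEq ι] [CommRing R]

lemma pow_mulVec_of_mulVec_eq_smul {A : Matrix ι ι R} {u : ι → R} {μ : R} (h : A *ᵥ u = μ • u)
    (t : ℕ) : A ^ t *ᵥ u = μ ^ t • u := by
  induction t with
  | zero => simp
  | succ t ih => rw [pow_succ, ← mulVec_mulVec, h, mulVec_smul, ih, smul_smul, pow_succ']

lemma sum_star_dotProduct_smul_eq_self [StarRing R] {F : ι → ι → R}
    (hF : ∀ j l, star (F j) ⬝ᵥ F l = if j = l then 1 else 0) (w : ι → R) :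
    ∑ j, (star (F j) ⬝ᵥ w) • F j = w := by
  have isometry : (of F)ᵀᴴ * (of F)ᵀ = 1 := by
    ext j l
    exact (hF j l).trans one_apply.symm
  calc ∑ j, (star (F j) ⬝ᵥ w) • F j = (of F)ᵀ *ᵥ ((of F)ᵀᴴ *ᵥ w) := by
        simp only [mulVec_eq_sum (v := (of F)ᵀᴴ *ᵥ w), op_smul_eq_smul]
        rfl
    _ = w := by rw [mulVec_mulVec, mul_eq_one_comm.mp isometry, one_mulVec]

lemma pow_mulVec_eq_sum_of_orthonormal [StarRing R] {A : Matrix ι ι R} {F : ι → ι → R} {μ : ι → R}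
    (hF : ∀ j l, star (F j) ⬝ᵥ F l = if j = l then 1 else 0) (hA : ∀ j, A *ᵥ F j = μ j • F j)
    (w : ι → R) (t : ℕ) : A ^ t *ᵥ w = ∑ j, μ j ^ t • (star (F j) ⬝ᵥ w) • F j := by
  conv_lhs => rw [← sum_star_dotProduct_smul_eq_self hF w]
  simp only [mulVec_sum, mulVec_smul, pow_mulVec_of_mulVec_eq_smul (hA _)]
  exact sum_congr rfl fun j _ => smul_comm _ _ _

open scoped Matrix.Norms.L2Operator in
lemma norm_eq_one_of_mem_unitaryGroup_of_mulVec_eq_smul {A : Matrix ι ι ℂ}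
    (hA : A ∈ unitaryGroup ι ℂ) {u : ι → ℂ} (hu : u ≠ 0) {μ : ℂ}
    (h : A *ᵥ u = μ • u) : ‖μ‖ = 1 := by
  have eigenvalue : Module.End.HasEigenvalue (toLin' A) μ :=
    Module.End.hasEigenvalue_of_hasEigenvector ⟨Module.End.mem_eigenspace_iff.mpr h, hu⟩
  exact spectrum.norm_eq_one_of_unitary hA (spectrum_toLin' A ▸ eigenvalue.mem_spectrum)

end EigenvectorExpansion

section DiscreteFourier

open ZMod

variable {d : ℕ} [NeZero d] {E : Type*} [AddCommGroup E] [Module ℂ E]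

lemma dft_comp_add_right (ψ : ZMod d → E) (a k : ZMod d) :
    𝓕 (fun n => ψ (n + a)) k = stdAddChar (a * k) • 𝓕 ψ k := by
  simp only [dft_apply, smul_sum, smul_smul, ← AddChar.map_add_eq_mul]
  refine Fintype.sum_equiv (Equiv.addRight a) _ _ fun n => ?_
  rw [Equiv.coe_addRight]
  congr 2
  ring

lemma dft_linearMap_comp {F : Type*} [AddCommGroup F] [Module ℂ F] (L : E →ₗ[ℂ] F)
    (ψ : ZMod d → E) (k : ZMod d) : 𝓕 (fun n => L (ψ n)) k = L (𝓕 ψ k) := by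
  simp only [dft_apply, map_sum, LinearMap.map_smul]

lemma stdAddChar_mul_eq_exp (k n : ZMod d) :
    stdAddChar (k * n) = exp (2 * Real.pi * I * k.val * n.val / d) := by
  have cast_eq : k * n = ((k.val * n.val : ℕ) : ℤ) := by simp
  rw [cast_eq, stdAddChar_coe]
  push_cast
  ring_nf

lemma conj_stdAddChar (k : ZMod d) : conj (stdAddChar k : ℂ) = stdAddChar (-k) := by
  rw [stdAddChar_apply, stdAddChar_apply, AddChar.map_neg_eq_inv, Circle.coe_inv_eq_conj]

end DiscreteFourier

section RecycledCoinWalk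

open ZMod

variable {d : ℕ}

lemma Urc_apply (φ : ℝ) (ψ : WState d) (n : ZMod d) :
    Urc d φ ψ n = Mplus (Real.pi / 4 * (1 + φ)) *ᵥ ψ (n + 1) +
      Mminus (Real.pi / 4 * (1 + φ)) *ᵥ ψ (n + -1) := by
  have sqrt_two_div_two : (√2 : ℂ) / 2 = (√2 : ℂ)⁻¹ := by
    rw [← one_div]
    exact_mod_cast congrArg ofReal (Real.sqrt_div_self' (x := 2))
  ext i
  fin_cases i <;>
    simp [Urc, memOp, shiftOp, coinOp, enc, dec₁, dec₂, Chat, Cmat, Mplus, Mminus, mulVec,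
      dotProduct, Fin.sum_univ_four, sqrt_two_div_two, sub_eq_add_neg]

lemma conjTranspose_Mplus_mul_self_add_conjTranspose_Mminus_mul_self (θ : ℝ) :
    (Mplus θ)ᴴ * Mplus θ + (Mminus θ)ᴴ * Mminus θ = 1 := by
  have half_add_half : (√2 : ℂ)⁻¹ * (√2 : ℂ)⁻¹ + (√2 : ℂ)⁻¹ * (√2 : ℂ)⁻¹ = 1 := by
    rw [← mul_inv, ← ofReal_mul, Real.mul_self_sqrt zero_le_two]
    norm_num
  have sin_sq_add_cos_sq : (Real.sin θ : ℂ) * Real.sin θ + Real.cos θ * Real.cos θ = 1 := by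
    exact_mod_cast (by simp [← sq] : Real.sin θ * Real.sin θ + Real.cos θ * Real.cos θ = 1)
  have cos_sq_add_sin_sq := (add_comm _ _).trans sin_sq_add_cos_sq
  ext i j
  fin_cases i <;> fin_cases j <;>
    simp [Mplus, Mminus, mul_apply, Fin.sum_univ_four, half_add_half, sin_sq_add_cos_sq,
      cos_sq_add_sin_sq, mul_comm (Real.sin θ : ℂ) (Real.cos θ), -ofReal_cos, -ofReal_sin]

lemma conjTranspose_Mplus_mul_Mminus (θ : ℝ) : (Mplus θ)ᴴ * Mminus θ = 0 := by
  ext i j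
  fin_cases i <;> fin_cases j <;> simp [Mplus, Mminus, mul_apply, Fin.sum_univ_four]

variable [NeZero d]

lemma Mk_eq_stdAddChar_smul_add (k : ZMod d) (θ : ℝ) :
    Mk d k θ = (stdAddChar k : ℂ) • Mplus θ + (stdAddChar (-k) : ℂ) • Mminus θ := by
  rw [AddChar.map_neg_eq_inv, stdAddChar_apply, toCircle_apply, ← exp_neg]
  ext i j
  fin_cases i <;> fin_cases j <;> simp [Mk, Mplus, Mminus, div_eq_mul_inv]

lemma Mk_mem_unitaryGroup (k : ZMod d) (θ : ℝ) : Mk d k θ ∈ unitaryGroup (Fin 4) ℂ := by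
  have phase_mul : (stdAddChar (-k) * stdAddChar k : ℂ) = 1 := by
    rw [← AddChar.map_add_eq_mul, neg_add_cancel, AddChar.map_zero_eq_one]
  have cross_eq_zero : (Mminus θ)ᴴ * Mplus θ = 0 := by
    simpa using congrArg conjTranspose (conjTranspose_Mplus_mul_Mminus θ)
  rw [mem_unitaryGroup_iff', star_eq_conjTranspose, Mk_eq_stdAddChar_smul_add,
    ← conjTranspose_Mplus_mul_self_add_conjTranspose_Mminus_mul_self θ]
  simp only [conjTranspose_add, conjTranspose_smul, ← starRingEnd_apply, conj_stdAddChar, neg_neg,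
    add_mul, mul_add, smul_mul_smul_comm, conjTranspose_Mplus_mul_Mminus, cross_eq_zero, smul_zero,
    add_zero, zero_add, phase_mul, mul_comm (stdAddChar k : ℂ), one_smul]

lemma norm_eq_one_of_Mk_mulVec_eq_smul {k : ZMod d} {θ : ℝ} {u : Fin 4 → ℂ} {μ : ℂ}
    (hu : cdot u u = 1) (h : Mk d k θ *ᵥ u = μ • u) : ‖μ‖ = 1 := by
  refine norm_eq_one_of_mem_unitaryGroup_of_mulVec_eq_smul (Mk_mem_unitaryGroup k θ) ?_ h
  rintro rfl
  simp [cdot] at hu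

lemma dft_Urc (φ : ℝ) (ψ : WState d) (k : ZMod d) :
    𝓕 (Urc d φ ψ) k = Mk d k (Real.pi / 4 * (1 + φ)) *ᵥ 𝓕 ψ k := by
  have Urc_eq : Urc d φ ψ = (fun n => mulVecLin (Mplus (Real.pi / 4 * (1 + φ))) (ψ (n + 1))) +
      fun n => mulVecLin (Mminus (Real.pi / 4 * (1 + φ))) (ψ (n + -1)) :=
    funext (Urc_apply φ ψ)
  rw [Urc_eq, map_add, Pi.add_apply, dft_linearMap_comp, dft_linearMap_comp,
    dft_comp_add_right, dft_comp_add_right, one_mul, neg_one_mul, Mk_eq_stdAddChar_smul_add,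
    add_mulVec, smul_mulVec, smul_mulVec, LinearMap.map_smul, LinearMap.map_smul,
    mulVecLin_apply, mulVecLin_apply]

lemma dft_iterate_Urc (φ : ℝ) (ψ : WState d) (t : ℕ) (k : ZMod d) :
    𝓕 ((Urc d φ)^[t] ψ) k = Mk d k (Real.pi / 4 * (1 + φ)) ^ t *ᵥ 𝓕 ψ k := by
  induction t with
  | zero => simp
  | succ t ih => rw [Function.iterate_succ_apply', dft_Urc, ih, mulVec_mulVec, pow_succ']

lemma FT_eq_dft (ψ : WState d) : FT d ψ = 𝓕 ψ := by
  ext1 k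
  rw [FT, dft_apply]
  refine sum_congr rfl fun n _ => ?_
  rw [mul_comm n k, AddChar.map_neg_eq_inv, stdAddChar_mul_eq_exp, exp_neg]

lemma FT_initState (v : Fin 4 → ℂ) (k : ZMod d) : FT d (initState d v) k = v := by
  have initState_eq (n : ZMod d) : initState d v n = if n = 0 then v else 0 := by
    ext i
    simp only [initState, ite_apply, Pi.zero_apply]
  simp [FT_eq_dft, dft_apply, initState_eq]

/-- The `t`-independent coefficient of `λ_j(k) ^ t` in the amplitude at position `n` of the walk
started at `ψ`, with `u` in the role of the eigenvector `φ_j(k)`. It lives in `EuclideanSpace`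
because its inner products are the terms of the time-averaged distribution. -/
def modeAmplitude (ψ : WState d) (n k : ZMod d) (u : Fin 4 → ℂ) : EuclideanSpace ℂ (Fin 4) :=
  WithLp.toLp 2 (((d : ℂ)⁻¹ * stdAddChar (k * n) * cdot u (FT d ψ k)) • u)

lemma inner_modeAmplitude (ψ : WState d) (n k m : ZMod d) (u w : Fin 4 → ℂ) :
    ⟪modeAmplitude ψ n k u, modeAmplitude ψ n m w⟫_ℂ =
      1 / (d : ℂ) ^ 2 * conj (cdot u (FT d ψ k)) * cdot w (FT d ψ m) * cdot u w *
        exp (2 * Real.pi * I * n.val * ((m.val : ℂ) - (k.val : ℂ)) / d) := by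
  have inner_eq_cdot : ⟪WithLp.toLp 2 u, WithLp.toLp 2 w⟫_ℂ = cdot u w := by
    rw [EuclideanSpace.inner_toLp_toLp, dotProduct_comm]
    rfl
  have phase_eq : conj (stdAddChar (k * n) : ℂ) * stdAddChar (m * n) =
      exp (2 * Real.pi * I * n.val * ((m.val : ℂ) - (k.val : ℂ)) / d) := by
    rw [conj_stdAddChar, AddChar.map_neg_eq_inv, stdAddChar_mul_eq_exp, stdAddChar_mul_eq_exp,
      ← exp_neg, ← exp_add]
    ring_nf
  rw [modeAmplitude, modeAmplitude, WithLp.toLp_smul, WithLp.toLp_smul, inner_smul_left,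
    inner_smul_right, inner_eq_cdot, ← phase_eq]
  simp only [map_mul, map_inv₀, map_natCast]
  ring

lemma toLp_iterate_Urc_apply_eq_sum {φ : ℝ} {Φ : ZMod d → Fin 4 → Fin 4 → ℂ}
    {lam : ZMod d → Fin 4 → ℂ}
    (horth : ∀ k j l, cdot (Φ k j) (Φ k l) = if j = l then 1 else 0)
    (heig : ∀ k j, Mk d k (Real.pi / 4 * (1 + φ)) *ᵥ Φ k j = lam k j • Φ k j)
    (ψ : WState d) (n : ZMod d) (t : ℕ) :
    WithLp.toLp 2 ((Urc d φ)^[t] ψ n) =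
      ∑ a : ZMod d × Fin 4, lam a.1 a.2 ^ t • modeAmplitude ψ n a.1 (Φ a.1 a.2) := by
  have dft_eq (k : ZMod d) : 𝓕 ((Urc d φ)^[t] ψ) k =
      ∑ j, lam k j ^ t • cdot (Φ k j) (FT d ψ k) • Φ k j := by
    rw [dft_iterate_Urc, FT_eq_dft]
    exact pow_mulVec_eq_sum_of_orthonormal (horth k) (heig k) _ t
  have inversion : (Urc d φ)^[t] ψ n =
      (d : ℂ)⁻¹ • ∑ k, (stdAddChar (k * n) : ℂ) • 𝓕 ((Urc d φ)^[t] ψ) k := by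
    rw [← invDFT_apply, LinearEquiv.symm_apply_apply]
  rw [inversion, Fintype.sum_prod_type]
  simp only [dft_eq, modeAmplitude, smul_sum, WithLp.toLp_sum, ← WithLp.toLp_smul, smul_smul]
  refine sum_congr rfl fun k _ => sum_congr rfl fun j _ => ?_
  congr 2
  ring

end RecycledCoinWalk

theorem statement14_general (d : ℕ) [NeZero d] (φ : ℝ) (ψ₀ : WState d)
    (Φ : ZMod d → Fin 4 → Fin 4 → ℂ) (lam : ZMod d → Fin 4 → ℂ)
    (horth : ∀ k j l, cdot (Φ k j) (Φ k l) = if j = l then 1 else 0)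
    (heig : ∀ k j, Mk d k (Real.pi / 4 * (1 + φ)) *ᵥ Φ k j = lam k j • Φ k j)
    (n : ZMod d) :
    Tendsto (fun T : ℕ => (1 / (T : ℂ)) * ∑ t ∈ Finset.Icc 1 T,
        (prob d φ ψ₀ n t : ℂ)) atTop
      (𝓝 (∑ k : ZMod d, ∑ m : ZMod d, ∑ j : Fin 4, ∑ l : Fin 4,
        if lam k j = lam m l then
          1 / (d : ℂ) ^ 2 * conj (cdot (Φ k j) (FT d ψ₀ k)) * cdot (Φ m l) (FT d ψ₀ m)
            * cdot (Φ k j) (Φ m l)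
            * exp (2 * Real.pi * I * n.val * ((m.val : ℂ) - (k.val : ℂ)) / d)
        else 0)) := by
  have norm_lam (a : ZMod d × Fin 4) : ‖lam a.1 a.2‖ = 1 :=
    norm_eq_one_of_Mk_mulVec_eq_smul (by simp [horth]) (heig a.1 a.2)
  have prob_eq (t : ℕ) : prob d φ ψ₀ n t =
      ‖∑ a : ZMod d × Fin 4, lam a.1 a.2 ^ t • modeAmplitude ψ₀ n a.1 (Φ a.1 a.2)‖ ^ 2 := by
    rw [← toLp_iterate_Urc_apply_eq_sum horth heig, EuclideanSpace.norm_sq_eq, prob]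
  simp only [prob_eq, ← inner_modeAmplitude]
  convert tendsto_average_norm_sq_sum_pow_smul norm_lam
    (fun a => modeAmplitude ψ₀ n a.1 (Φ a.1 a.2)) using 2
  · rfl
  · simp only [Fintype.sum_prod_type]
    exact sum_congr rfl fun k _ => sum_comm

/-- the time-averaged distribution exists and equals the sum of
`f(n,k,m,j,l)` over all quadruples with `λ_j(k) = λ_l(m)`. -/
theorem statement14 (d : ℕ) [NeZero d] (hd : 1 ≤ d) (φ θ : ℝ)
    (hθ : θ = Real.pi / 4 * (1 + φ))
    (v : Fin 4 → ℂ) (hv : ∑ i : Fin 4, ‖v i‖ ^ 2 = 1)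
    (Φ : ZMod d → Fin 4 → Fin 4 → ℂ) (lam : ZMod d → Fin 4 → ℂ)
    (horth : ∀ k j l, cdot (Φ k j) (Φ k l) = if j = l then 1 else 0)
    (heig : ∀ k j, (Mk d k θ).mulVec (Φ k j) = lam k j • Φ k j)
    (n : ZMod d) :
    Tendsto (fun T : ℕ => (1 / (T : ℂ)) * ∑ t ∈ Finset.Icc 1 T,
        (prob d φ (initState d v) n t : ℂ)) atTop
      (nhds (∑ k : ZMod d, ∑ m : ZMod d, ∑ j : Fin 4, ∑ l : Fin 4,
        if lam k j = lam m l then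
          1 / (d : ℂ) ^ 2 * (starRingEnd ℂ) (cdot (Φ k j) v) * cdot (Φ m l) v
            * cdot (Φ k j) (Φ m l)
            * Complex.exp (2 * Real.pi * Complex.I * n.val
                * ((m.val : ℂ) - (k.val : ℂ)) / d)
        else 0)) := by
  subst hθ
  simpa only [FT_initState] using statement14_general d φ (initState d v) Φ lam horth heig n

end
end
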